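/- Let ε, e, f be real numbers with 0 < ε < 1, 1 ≤ e ≤ 2/ε, and f ≥ 1, and set s = 1/e. Then the quantity 2·s·f − s²·e is positive, and (2 + s·(2 − ε·e))² / (2·s·f − s²·e) ≤ 8/ε + 4 − 2ε. -/

import Mathlib

theorem stmt_1 (ε e f : ℝ) (hε0 : 0 < ε) (hε1 : ε < 1)
    (he1 : 1 ≤ e) (he2 : e ≤ 2 / ε) (hf : 1 ≤ f) (s : ℝ) (hs : s = 1 / e) :
    0 < 2 * s * f - s ^ 2 * e ∧
      (2 + s * (2 - ε * e)) ^ 2 / (2 * s * f - s ^ 2 * e) ≤ 8 / ε + 4 - 2 * ε := by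
  have he : 0 < e := by linarith
  have hεe : 0 ≤ 2 - ε * e := by
    have := (le_div_iff₀ hε0).mp he2
    linarith
  have hden : 2 * s * f - s ^ 2 * e = (2 * f - 1) / e := by
    rw [hs]
    field_simp
  have hlower : 1 / e ≤ (2 * f - 1) / e := by
    gcongr
    linarith
  have hinv : 0 < 1 / e := by positivity
  rw [hden]
  refine ⟨hinv.trans_le hlower, ?_⟩
  have hgap : 8 / ε + 4 - 2 * ε - (2 + s * (2 - ε * e)) ^ 2 / (1 / e) =
      ((2 - ε) ^ 2 * e * (2 - ε * e) + 4 * ε * (e - 1)) / (ε * e) := by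
    rw [hs]
    field_simp
    ring
  have hnonneg : 0 ≤ ((2 - ε) ^ 2 * e * (2 - ε * e) + 4 * ε * (e - 1)) / (ε * e) := by
    have := sub_nonneg.mpr he1
    positivity
  calc (2 + s * (2 - ε * e)) ^ 2 / ((2 * f - 1) / e)
      ≤ (2 + s * (2 - ε * e)) ^ 2 / (1 / e) := by gcongr
    _ ≤ 8 / ε + 4 - 2 * ε := by linarith
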